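/- (Theorem 1, part (ii)) Suppose (g_n^*) is an optimal configuration with overall channel h^* ≠ 0, and let n be an element with v_n ≠ 0. Then the smallest angle among ang(h^*, F_{n,1}), …, ang(h^*, F_{n,K}) is not equal to π/2; equivalently, it is impossible that ang(h^*, F_{n,l}) ≥ π/2 for all l ∈ {1,…,K} while ang(h^*, F_{n,i}) = π/2 for some i. -/

import Mathlib

/-- The angle in `[0,π]` between two nonzero complex numbers regarded as plane vectors:
`ang a b = arccos (Re (a * conj b) / (|a| * |b|))`. -/
noncomputable def ang (a b : ℂ) : ℝ :=
  Real.arccos ((a * (starRingEnd ℂ) b).re / (‖a‖ * ‖b‖))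

/-!
Adding a nonzero vector at a non-obtuse angle to `h` strictly increases `‖h‖`. Hence, at an
optimal configuration with overall channel `h`, an element that is off sees only alternatives at
obtuse angles to `h` (otherwise switch it on), and an element that is on contributes a vector at
an acute angle to `h` (otherwise switch it off). In either case the smallest angle is not `π / 2`.
-/

open InnerProductGeometry
open scoped RealInnerProductSpace

section InnerProduct

variable {E : Type*} [NormedAddCommGroup E] [InnerProductSpace ℝ E] {x y : E}

theorem norm_lt_norm_add_of_inner_nonneg (hy : y ≠ 0) (hxy : 0 ≤ ⟪x, y⟫) : ‖x‖ < ‖x + y‖ := by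
  refine lt_of_pow_lt_pow_left₀ 2 (norm_nonneg _) ?_
  have hy_sq : 0 < ‖y‖ ^ 2 := pow_pos (norm_pos_iff.mpr hy) 2
  linarith [norm_add_sq_real x y]

theorem norm_lt_norm_sub_of_inner_nonpos (hy : y ≠ 0) (hxy : ⟪x, y⟫ ≤ 0) : ‖x‖ < ‖x - y‖ := by
  rw [sub_eq_add_neg]
  exact norm_lt_norm_add_of_inner_nonneg (neg_ne_zero.mpr hy) (by rwa [inner_neg_right, neg_nonneg])

theorem angle_lt_pi_div_two_of_inner_pos (hxy : 0 < ⟪x, y⟫) : angle x y < Real.pi / 2 :=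
  Real.arccos_lt_pi_div_two.mpr (div_pos hxy (hxy.trans_le (real_inner_le_norm x y)))

end InnerProduct

theorem ang_eq_angle (a b : ℂ) : ang a b = angle a b := by
  rw [ang, angle, real_inner_comm, Complex.inner]

/-- A configuration: every element `m` is off (`g m = 0`) or contributes one of its alternatives
`F m i`. -/
def IsConfiguration {ι κ E : Type*} [Zero E] (F : ι → κ → E) (g : ι → E) : Prop :=
  ∀ m, g m = 0 ∨ ∃ i, g m = F m i

theorem IsConfiguration.update {ι κ E : Type*} [DecidableEq ι] [Zero E] {F : ι → κ → E}
    {g : ι → E} (hg : IsConfiguration F g) {n : ι} {w : E} (hw : w = 0 ∨ ∃ i, w = F n i) :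
    IsConfiguration F (Function.update g n w) := by
  intro m
  obtain rfl | hmn := eq_or_ne m n
  · simpa only [Function.update_self] using hw
  · simpa only [Function.update_of_ne hmn] using hg m

/-- The overall channel `h_d + ∑ m, g m`: the direct channel plus the contributions of all
elements. -/
def overallChannel {ι E : Type*} [Fintype ι] [AddCommMonoid E] (h_d : E) (g : ι → E) : E :=
  h_d + ∑ m, g m

theorem overallChannel_update {ι E : Type*} [Fintype ι] [DecidableEq ι] [AddCommGroup E]
    (h_d : E) (g : ι → E) (n : ι) (w : E) :
    overallChannel h_d (Function.update g n w) = overallChannel h_d g + (w - g n) := by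
  rw [overallChannel, overallChannel, Finset.sum_update_of_mem (Finset.mem_univ n),
    Finset.sum_eq_add_sum_sdiff_singleton_of_mem (Finset.mem_univ n) g]
  abel

/-- A configuration is optimal if its overall channel has the largest norm among all
configurations. -/
structure IsOptimalConfiguration {ι κ E : Type*} [Fintype ι] [NormedAddCommGroup E]
    (h_d : E) (F : ι → κ → E) (g : ι → E) : Prop where
  isConfiguration : IsConfiguration F g
  norm_le : ∀ g', IsConfiguration F g' → ‖overallChannel h_d g'‖ ≤ ‖overallChannel h_d g‖

namespace IsOptimalConfiguration

variable {ι κ E : Type*} [Fintype ι] [NormedAddCommGroup E]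
  {h_d : E} {F : ι → κ → E} {g : ι → E}

theorem norm_overallChannel_add_le (hg : IsOptimalConfiguration h_d F g) {n : ι} {w : E}
    (hw : w = 0 ∨ ∃ i, w = F n i) :
    ‖overallChannel h_d g + (w - g n)‖ ≤ ‖overallChannel h_d g‖ := by
  classical
  rw [← overallChannel_update]
  exact hg.norm_le _ (hg.isConfiguration.update hw)

variable [InnerProductSpace ℝ E]

theorem inner_neg_of_eq_zero (hg : IsOptimalConfiguration h_d F g) {n : ι} (hgn : g n = 0)
    {i : κ} (hFi : F n i ≠ 0) : ⟪overallChannel h_d g, F n i⟫ < 0 := by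
  have switch_on : ‖overallChannel h_d g + F n i‖ ≤ ‖overallChannel h_d g‖ := by
    simpa only [hgn, sub_zero] using hg.norm_overallChannel_add_le (n := n) (.inr ⟨i, rfl⟩)
  contrapose! switch_on
  exact norm_lt_norm_add_of_inner_nonneg hFi switch_on

theorem inner_pos_of_ne_zero (hg : IsOptimalConfiguration h_d F g) {n : ι} (hgn : g n ≠ 0) :
    0 < ⟪overallChannel h_d g, g n⟫ := by
  have switch_off : ‖overallChannel h_d g - g n‖ ≤ ‖overallChannel h_d g‖ := by
    simpa only [zero_sub, ← sub_eq_add_neg] using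
      hg.norm_overallChannel_add_le (n := n) (.inl rfl)
  contrapose! switch_off
  exact norm_lt_norm_sub_of_inner_nonpos hgn switch_off

end IsOptimalConfiguration

theorem stmt_7_general {ι κ E : Type*} [Fintype ι] [NormedAddCommGroup E] [InnerProductSpace ℝ E]
    {h_d : E} {F : ι → κ → E} {g : ι → E} (hg : IsOptimalConfiguration h_d F g)
    {n : ι} {i : κ} (hFi : F n i ≠ 0)
    (hmin : ∀ l, angle (overallChannel h_d g) (F n i) ≤ angle (overallChannel h_d g) (F n l)) :
    angle (overallChannel h_d g) (F n i) ≠ Real.pi / 2 := by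
  by_cases hgn : g n = 0
  · rw [Ne, ← inner_eq_zero_iff_angle_eq_pi_div_two]
    exact (hg.inner_neg_of_eq_zero hgn hFi).ne
  · obtain ⟨l, hl⟩ := (hg.isConfiguration n).resolve_left hgn
    have hacute : angle (overallChannel h_d g) (F n l) < Real.pi / 2 :=
      hl ▸ angle_lt_pi_div_two_of_inner_pos (hg.inner_pos_of_ne_zero hgn)
    exact ((hmin l).trans_lt hacute).ne

/-- Theorem 1 part (ii): the smallest angle among `ang(h^*, F n 1), …, ang(h^*, F n K)`
is never equal to `π/2` in an optimal configuration. -/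
theorem stmt_7
    {N K : ℕ} (hN : 0 < N) (hK : 0 < K)
    (h_d : ℂ) (v : Fin N → ℂ) (φ : Fin K → ℝ)
    (hφinj : Function.Injective φ)
    (hφrange : ∀ i, 0 ≤ φ i ∧ φ i < 2 * Real.pi)
    (F : Fin N → Fin K → ℂ)
    (hF : ∀ m i, F m i = v m * Complex.exp ((φ i : ℂ) * Complex.I))
    (g : Fin N → ℂ)
    (hg : ∀ m, g m = 0 ∨ ∃ i, g m = F m i)
    (hopt : ∀ g' : Fin N → ℂ, (∀ m, g' m = 0 ∨ ∃ i, g' m = F m i) →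
      ‖h_d + ∑ m, g' m‖ ≤ ‖h_d + ∑ m, g m‖)
    (hstar : h_d + ∑ m, g m ≠ 0)
    (n : Fin N) (hvn : v n ≠ 0)
    (i : Fin K)
    (hmin : ∀ l, ang (h_d + ∑ m, g m) (F n i) ≤ ang (h_d + ∑ m, g m) (F n l)) :
    ang (h_d + ∑ m, g m) (F n i) ≠ Real.pi / 2 := by
  have hFi : F n i ≠ 0 := hF n i ▸ mul_ne_zero hvn (Complex.exp_ne_zero _)
  simp only [ang_eq_angle] at hmin ⊢
  exact stmt_7_general ⟨hg, hopt⟩ hFi hmin
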